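/- Let κ be a singular cardinal and U an ultrafilter over a set S. If U is κ⁺-decomposable but κ-indecomposable, then U is almost <κ-decomposable, i.e., there is a cardinal λ < κ such that U is μ-decomposable for every regular cardinal μ with λ < μ < κ. -/

import Mathlib

open Cardinal Set

universe u v

/-- An ultrafilter is uniform if all of its members have full cardinality. -/
def Uniform {α : Type u} (U : Ultrafilter α) : Prop := ∀ X ∈ U, #X = #α

/-- An ultrafilter `U` over `S` is `l`-decomposable if there is `f : S → l`
such that preimages of sets of size `< l` are not in `U`. -/
def Decomposable {S : Type u} (U : Ultrafilter S) (l : Cardinal.{v}) : Prop :=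
  ∃ f : S → l.out, ∀ X : Set l.out, #X < l → f ⁻¹' X ∉ U

/-- The character of an ultrafilter: the least cardinality of a base. -/
noncomputable def charU {α : Type u} (U : Ultrafilter α) : Cardinal.{u} :=
  sInf {c | ∃ B : Set (Set α), #B = c ∧ (∀ X ∈ B, X ∈ U) ∧ ∀ Y ∈ U, ∃ X ∈ B, X ⊆ Y}

/-- The ultrafilter number at a cardinal `κ`: the minimal character of a
uniform ultrafilter over (a set of size) `κ`. -/
noncomputable def uNumber (κ : Cardinal.{u}) : Cardinal.{u} :=
  sInf {c | ∃ U : Ultrafilter κ.out, Uniform U ∧ charU U = c}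

/-!
Filtering the initial segments of `κ⁺` into `cf κ` many pieces gives a family `f` of `κ⁺` functions
`cf κ → κ` that increases modulo bounded sets, uniformly along a club of every index of small
cofinality. By club guessing it has strongly increasing subsequences of every regular length between
`cf κ` and `κ`, hence a least upper bound `g` modulo bounded sets.

Suppose first that some `i : S → cf κ` is unbounded modulo `U`, let `r : S → κ⁺` witness
`κ⁺`-decomposability, and let `μ` be a regular cardinal between `cf κ` and `κ` such that `U` is not
`μ`-decomposable. Then the coordinates from which on `f β` lies below `f (r s)` are bounded modulo
`U` by some `F s` not depending on `β`. So `s ↦ f (r s) (F s)` lies above every `f β` and below `g`,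
and leastness of `g` keeps it out of every set of size `< κ`: it witnesses `κ`-decomposability.

If there is no such `i`, then a single level of the filtration catches `κ⁺` many indices modulo `U`,
which makes `U` decomposable at every regular cardinal between the size of that level and `κ`.
-/

open Filter

/-! ### Well-orders -/

section WellOrder

variable {P : Type v} [LinearOrder P]

theorem exists_forall_lt_of_mk_lt_cof {B : Set P} (hB : #B < Order.cof P) :
    ∃ b, ∀ x ∈ B, x < b :=
  not_isCofinal_iff.1 fun h => (Order.cof_le h).not_gt hB

theorem exists_isLeast [WellFoundedLT P] {B : Set P} (hB : B.Nonempty) : ∃ x, IsLeast B x :=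
  ⟨wellFounded_lt.min B hB, wellFounded_lt.min_mem B hB, fun _ hx => wellFounded_lt.min_le hx⟩

theorem exists_isLUB_of_mk_lt_cof [WellFoundedLT P] {B : Set P} (hB : #B < Order.cof P) :
    ∃ x, IsLUB B x :=
  have ⟨b, hb⟩ := exists_forall_lt_of_mk_lt_cof hB
  exists_isLeast ⟨b, fun x hx => (hb x hx).le⟩

theorem cof_ord_toType {c : Cardinal.{v}} (hc : c.IsRegular) : Order.cof c.ord.ToType = c := by
  rw [Ordinal.cof_toType, hc.cof_ord]

theorem mk_Iio_ord_toType_lt {c : Cardinal.{v}} (x : c.ord.ToType) : #(Iio x) < c := by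
  simpa using mk_Iio_lt x (by simp)

theorem nonempty_ord_toType {c : Cardinal.{v}} (hc : ℵ₀ ≤ c) : Nonempty c.ord.ToType := by
  rw [← mk_ne_zero_iff, mk_ord_toType]
  exact (aleph0_pos.trans_le hc).ne'

theorem exists_strictMono_of_le_mk [WellFoundedLT P] {c : Cardinal.{v}} {C : Set P}
    (hC : c ≤ #C) : ∃ e : c.ord.ToType → P, StrictMono e ∧ ∀ x, e x ∈ C := by
  have h : Ordinal.type (α := c.ord.ToType) (· < ·) ≤ Ordinal.type (α := C) (· < ·) := by
    rw [Ordinal.type_toType, Cardinal.ord_le]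
    simpa using hC
  obtain ⟨e⟩ := Ordinal.type_le_iff'.1 h
  exact ⟨fun x => e x, fun _ _ hxy => e.map_rel_iff.2 hxy, fun x => (e x).2⟩

theorem exists_strictMono_forall_eq {A : Type v} {c : Cardinal.{v}} (hc : c.IsRegular)
    (hA : #A < c) (h : c.ord.ToType → A) :
    ∃ (a : A) (e : c.ord.ToType → c.ord.ToType), StrictMono e ∧ ∀ ξ, h (e ξ) = a := by
  obtain ⟨a, ha⟩ := infinite_pigeonhole_card h c (by simp) hc.aleph0_le (by rwa [hc.cof_ord])
  obtain ⟨e, he, hea⟩ := exists_strictMono_of_le_mk ha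
  exact ⟨a, e, he, hea⟩

theorem exists_forall_ge_eq_of_monotone {A : Type v} [PartialOrder A] {c : Cardinal.{v}}
    (hc : c.IsRegular) (hA : #A < c) {h : c.ord.ToType → A} (hh : Monotone h) :
    ∃ x, ∀ y, x ≤ y → h y = h x := by
  have := nonempty_ord_toType hc.aleph0_le
  obtain ⟨a, e, he, hea⟩ := exists_strictMono_forall_eq hc hA h
  refine ⟨e (Classical.arbitrary _), fun y hy => (hh hy).antisymm' ?_⟩
  rw [hea, ← hea y]
  exact hh he.le_apply

theorem exists_forall_ge_eq_of_antitone {Y : Type*} [Preorder Y] [Nonempty Y] [WellFoundedLT P]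
    {h : Y → P} (hh : Antitone h) : ∃ x, ∀ y, x ≤ y → h y = h x := by
  obtain ⟨_, ⟨x, rfl⟩, hx⟩ := exists_isLeast (range_nonempty h)
  exact ⟨x, fun y hy => (hh hy).antisymm (hx ⟨y, rfl⟩)⟩

theorem exists_forall_rel_restrict {Q P : Type*} [LinearOrder Q] [WellFoundedLT Q]
    (R : (y : Q) → (Iio y → P) → P → Prop) (hR : ∀ y u, ∃ p, R y u p) :
    ∃ x : Q → P, ∀ y, R y (fun z => x z) (x y) := by
  choose G hG using hR
  let x : Q → P := wellFounded_lt.fix fun y u => G y fun z => u z z.2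
  refine ⟨x, fun y => ?_⟩
  have hx : x y = G y fun z => x z := WellFounded.fix_eq _ _ _
  rw [hx]
  exact hG y _

end WellOrder

/-! ### Clubs and club guessing -/

section ClubGuessing

variable {P Q : Type v} [LinearOrder P] [LinearOrder Q] [WellFoundedLT Q]

theorem isClub_range_of_isNormal {f : Q → P} (hf : Order.IsNormal f)
    (hcof : IsCofinal (range f)) : IsClub (range f) := by
  refine ⟨fun B hB hne _ p hp => ?_, hcof⟩
  obtain ⟨_, ⟨y, rfl⟩, hy⟩ := hcof p
  obtain ⟨q, hq⟩ : ∃ q, IsLUB (f ⁻¹' B) q :=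
    exists_isLeast ⟨y, fun z hz => hf.strictMono.le_iff_le.1 ((hp.1 hz).trans hy)⟩
  have hne' : (f ⁻¹' B).Nonempty := by rwa [← image_nonempty, image_preimage_eq_of_subset hB]
  have hfq := hf.map_isLUB hq hne'
  rw [image_preimage_eq_of_subset hB] at hfq
  exact ⟨q, hfq.unique hp⟩

theorem isClub_preimage_of_isNormal [WellFoundedLT P] {f : Q → P} (hf : Order.IsNormal f)
    (hcof : IsCofinal (range f)) (hQ : Order.cof Q ≠ ℵ₀) {E : Set P} (hE : IsClub E) :
    IsClub (f ⁻¹' E) := by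
  refine ⟨fun B hB hne _ q hq => hE.isLUB_mem (image_subset_iff.2 hB) (hne.image f)
    (hf.map_isLUB hq hne), fun q => ?_⟩
  have hP : Order.cof P ≠ ℵ₀ := Order.cof_congr_of_strictMono hf.strictMono hcof ▸ hQ
  obtain ⟨_, ⟨hpE, ⟨y, rfl⟩⟩, hy⟩ :=
    (hE.inter hP (isClub_range_of_isNormal hf hcof)).isCofinal (f q)
  exact ⟨y, hpE, hf.strictMono.le_iff_le.1 hy⟩

theorem exists_isGreatest_inter_Iic {E : Set Q} (hE : IsClub E) {β : Q}
    (h : (E ∩ Iic β).Nonempty) : ∃ x, IsGreatest (E ∩ Iic β) x := by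
  obtain ⟨x, hx⟩ : ∃ x, IsLUB (E ∩ Iic β) x := exists_isLeast ⟨β, fun _ hy => hy.2⟩
  exact ⟨x, ⟨hE.isLUB_mem inter_subset_left h hx, hx.2 fun _ hy => hy.2⟩, hx.1⟩

theorem exists_forall_isGreatest_mem {Y : Type*} [LinearOrder Y] [Nonempty Y] {E : Y → Set Q}
    (hE : ∀ y, IsClub (E y)) (hanti : Antitone E) (β : Q) :
    ∃ z, ∀ y, z ≤ y → ∀ y', z ≤ y' → ∀ x, IsGreatest (E y ∩ Iic β) x → x ∈ E y' := by
  by_cases hne : ∀ y, (E y ∩ Iic β).Nonempty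
  · choose g hg using fun y => exists_isGreatest_inter_Iic (hE y) (hne y)
    have hganti : Antitone g := fun y y' h =>
      (hg y').mono (hg y) (inter_subset_inter_left _ (hanti h))
    obtain ⟨z, hgz⟩ := exists_forall_ge_eq_of_antitone hganti
    refine ⟨z, fun y hy y' hy' x hx => ?_⟩
    rw [hx.unique (hg y), hgz y hy, ← hgz y' hy']
    exact (hg y').1.1
  · push Not at hne
    obtain ⟨z, hz⟩ := hne
    exact ⟨z, fun y hy _ _ x hx =>
      (hz.subset ((inter_subset_inter_left _ (hanti hy)) hx.1) : x ∈ (∅ : Set Q)).elim⟩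

theorem exists_antitone_isClub {ρ : Cardinal.{v}} (hρ : ℵ₀ ≤ ρ) (hρQ : ρ < Order.cof Q)
    {G : Set Q → Set Q} (hG : ∀ E, IsClub (G E)) :
    ∃ E : ρ.ord.ToType → Set Q, Antitone E ∧ (∀ y, IsClub (E y)) ∧
      ∀ z y, z < y → E y ⊆ G (E z) := by
  obtain ⟨E, hE⟩ := exists_forall_rel_restrict (Q := ρ.ord.ToType) (P := Set Q)
    (fun y u F => F = ⋂ z : Iio y, G (u z)) fun _ _ => ⟨_, rfl⟩
  have hsub : ∀ z y, z < y → E y ⊆ G (E z) := fun z y hzy => by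
    rw [hE y]
    exact iInter_subset (fun z : Iio y => G (E z)) ⟨z, hzy⟩
  refine ⟨E, fun z y hzy => ?_, fun y => ?_, hsub⟩
  · rw [hE z]
    exact subset_iInter fun w => hsub _ _ (lt_of_lt_of_le w.2 hzy)
  · rw [hE y]
    refine IsClub.iInter (hρ.trans_lt hρQ).ne' ?_ fun z => hG _
    simpa using (mk_Iio_ord_toType_lt y).trans hρQ

/-- The points of `E` guessed by the ladder `c`: the projections to `E` of the points of `c`. -/
def ladderGuess {Y : Type*} (c : Y → Q) (E : Set Q) : Set Q :=
  {x | ∃ ξ, IsGreatest (E ∩ Iic (c ξ)) x}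

theorem le_mk_ladderGuess {θ : Cardinal.{v}} (hθ : θ.IsRegular) {c e : θ.ord.ToType → Q}
    (hc : StrictMono c) {α : Q} (hcα : IsLUB (range c) α) (he : StrictMono e)
    (heα : IsLUB (range e) α) {E : Set Q} (hE : IsClub E) (heE : ∀ ξ, e ξ ∈ E) :
    θ ≤ #(ladderGuess c E) := by
  have := Cardinal.noMaxOrder hθ.aleph0_le
  have hlt : ∀ {d : θ.ord.ToType → Q}, StrictMono d → IsLUB (range d) α → ∀ ξ, d ξ < α :=
    fun hd hdα ξ => (hd (Order.lt_succ ξ)).trans_le (hdα.1 ⟨_, rfl⟩)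
  by_contra! hcard
  have hbelow : ∀ d : ladderGuess c E, ∃ ξ, d < c ξ := fun ⟨d, ξ, hd⟩ =>
    ⟨_, lt_of_le_of_lt hd.1.2 (hc (Order.lt_succ ξ))⟩
  choose k hk using hbelow
  obtain ⟨b, hb⟩ := exists_forall_lt_of_mk_lt_cof (B := range k)
    (by rw [cof_ord_toType hθ]; exact mk_range_le.trans_lt hcard)
  obtain ⟨_, ⟨ξ, rfl⟩, hξ⟩ := (lt_isLUB_iff heα).1 (hlt hc hcα b)
  obtain ⟨_, ⟨η, rfl⟩, hη⟩ := (lt_isLUB_iff hcα).1 (hlt he heα ξ)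
  obtain ⟨x, hx⟩ := exists_isGreatest_inter_Iic hE ⟨e ξ, heE ξ, hη.le⟩
  have hbx : c b < x := hξ.trans_le (hx.2 ⟨heE ξ, hη.le⟩)
  exact (hbx.trans (hk ⟨x, η, hx⟩)).not_ge (hc (hb _ ⟨_, rfl⟩)).le

-- If no `E` works, a decreasing sequence of `θ⁺` clubs, each refuting its predecessors, can be
-- built. At a limit `α` of cofinality `θ` of their intersection the guesses eventually stabilise.
theorem exists_club_guessing {θ : Cardinal.{v}} (hθ : θ.IsRegular)
    (hθQ : Order.succ θ < Order.cof Q) :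
    ∃ C : Q → Set Q, ∀ E, IsClub E → ∃ α, C α ⊆ E ∧ θ ≤ #(C α) := by
  have hρ : (Order.succ θ).IsRegular := isRegular_succ hθ.aleph0_le
  have := nonempty_ord_toType hρ.aleph0_le
  have := Cardinal.noMaxOrder hρ.aleph0_le
  have hρQ : ℵ₀ < Order.cof Q := hρ.aleph0_le.trans_lt hθQ
  have hθQ' : θ < Order.cof Q := (Order.lt_succ θ).trans hθQ
  have : Nonempty Q := Order.cof_ne_zero_iff.1 (aleph0_pos.trans hρQ).ne'
  let c (α : Q) : θ.ord.ToType → Q :=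
    Classical.epsilon fun d => StrictMono d ∧ IsLUB (range d) α
  by_contra! hcon
  choose G hG hGfail using fun E => hcon fun α => ladderGuess (c α) E
  obtain ⟨E, hanti, hE, hEG⟩ := exists_antitone_isClub hρ.aleph0_le hθQ hG
  have hinter : IsClub (⋂ y, E y) := IsClub.iInter hρQ.ne' (by simpa using hθQ) hE
  obtain ⟨e, he, heE⟩ := exists_strictMono_of_le_mk (hθQ'.le.trans (Order.cof_le hinter.isCofinal))
  obtain ⟨α, heα⟩ : ∃ α, IsLUB (range e) α :=
    exists_isLUB_of_mk_lt_cof (mk_range_le.trans_lt (by simpa using hθQ'))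
  obtain ⟨hc, hcα⟩ : StrictMono (c α) ∧ IsLUB (range (c α)) α :=
    Classical.epsilon_spec (p := fun d => StrictMono d ∧ IsLUB (range d) α) ⟨e, he, heα⟩
  choose z hz using fun ξ => exists_forall_isGreatest_mem hE hanti (c α ξ)
  obtain ⟨b, hb⟩ := exists_forall_lt_of_mk_lt_cof (B := range z)
    (by rw [cof_ord_toType hρ]; exact mk_range_le.trans_lt (by simp))
  refine (hGfail (E b) α ?_).not_ge
    (le_mk_ladderGuess hθ hc hcα he heα (hE b) fun ξ => mem_iInter.1 (heE ξ) b)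
  rintro x ⟨ξ, hx⟩
  have hzb : z ξ ≤ b := (hb _ ⟨ξ, rfl⟩).le
  exact hEG b _ (Order.lt_succ b) (hz ξ b hzb _ (hzb.trans (Order.le_succ b)) x hx)

end ClubGuessing

/-! ### Strongly increasing subsequences -/

theorem image_restrict_Iio {P Q : Type*} [Preorder Q] {x : Q → P} {w y : Q} (hw : w ≤ y) :
    (fun z : Iio y => x z) '' {z | (z : Q) < w} = x '' Iio w := by
  ext q
  exact ⟨fun ⟨z, hz, hzq⟩ => ⟨z, hz, hzq⟩, fun ⟨z, hz, hzq⟩ => ⟨⟨z, hz.trans_le hw⟩, hz, hzq⟩⟩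

theorem isNormal_of_isLUB_image_Iio {P Q : Type*} [LinearOrder P] [LinearOrder Q]
    {x ζ : Q → P} (hζ : ∀ y, IsLUB (x '' Iio y) (ζ y))
    (hx : ∀ y, ζ y < x y) : Order.IsNormal ζ := by
  refine ⟨fun z y hzy => (hx z).trans_le ((hζ y).1 ⟨z, hzy, rfl⟩), fun {y} hy b hb => ?_⟩
  refine (hζ y).2 ?_
  rintro _ ⟨z, hz, rfl⟩
  obtain ⟨w, hwy, hzw⟩ := hy.lt_iff_exists_lt.1 hz
  exact ((hζ w).1 ⟨z, hzw, rfl⟩).trans (hb ⟨w, hwy, rfl⟩)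

section Recursion

variable {P Q : Type v} [LinearOrder P] [WellFoundedLT P] [LinearOrder Q] [WellFoundedLT Q]

theorem mk_Iio_lt_cof [IsRegularCardinalOrder P] (y : P) : #(Iio y) < Order.cof P := by
  rw [Order.cof_eq_cardinalMk]
  exact mk_Iio_lt y Cardinal.ord_cardinalMk

theorem exists_isCofinal_pairwise [IsRegularCardinalOrder P] {R : P → P → Prop}
    (hR : ∀ β, ∃ γ, R β γ) (hup : ∀ β γ γ', R β γ → γ ≤ γ' → R β γ') :
    ∃ X : Set P, IsCofinal X ∧ ∀ β ∈ X, ∀ γ ∈ X, β < γ → R β γ := by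
  choose φ hφ using hR
  obtain ⟨x, hx⟩ := exists_forall_rel_restrict (Q := P) (P := P)
    (fun _ u p => ∀ z, u z < p ∧ R (u z) p) fun y u => by
      obtain ⟨b, hb⟩ := exists_forall_lt_of_mk_lt_cof (mk_range_le (f := u) |>.trans_lt
        (mk_Iio_lt_cof y))
      obtain ⟨b', hb'⟩ := exists_forall_lt_of_mk_lt_cof (mk_range_le (f := φ ∘ u) |>.trans_lt
        (mk_Iio_lt_cof y))
      exact ⟨max b b', fun z => ⟨lt_max_of_lt_left (hb _ ⟨z, rfl⟩),
        hup _ _ _ (hφ (u z)) (le_max_of_le_right (hb' _ ⟨z, rfl⟩).le)⟩⟩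
  have hmono : StrictMono x := fun z y h => (hx y ⟨z, h⟩).1
  refine ⟨range x, fun p => ⟨x p, ⟨p, rfl⟩, hmono.le_apply⟩, ?_⟩
  rintro _ ⟨z, rfl⟩ _ ⟨y, rfl⟩ h
  exact (hx y ⟨z, hmono.lt_iff_lt.1 h⟩).2

theorem exists_interleaved_seq {ι : Type v} (hι : #ι < Order.cof P) (hQ : #Q < Order.cof P)
    (hcof : ℵ₀ ≤ Order.cof P) {X : Set P} (hX : IsCofinal X) (C : ι → Set Q)
    {D : Set P → P → Prop} (hD : ∀ B γ γ', D B γ → γ ≤ γ' → D B γ') :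
    ∃ x ζ : Q → P, (∀ y, x y ∈ X) ∧ (∀ y, IsLUB (x '' Iio y) (ζ y)) ∧ (∀ y, ζ y < x y) ∧
      ∀ y i, (∃ γ, D (ζ '' (C i ∩ Iic y)) γ) → D (ζ '' (C i ∩ Iic y)) (x y) := by
  let sups (y : Q) (u : Iio y → P) (i : ι) : Set P :=
    {q | ∃ w ∈ C i, w ≤ y ∧ IsLUB (u '' {z | z < w}) q}
  obtain ⟨x, hx⟩ := exists_forall_rel_restrict (Q := Q) (P := P)
    (fun y u p => p ∈ X ∧ (∀ q, IsLUB (range u) q → q < p) ∧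
      ∀ i, (∃ γ, D (sups y u i) γ) → D (sups y u i) p) fun y u => by
      have hu : #(range u) < Order.cof P := mk_range_le.trans_lt ((mk_set_le _).trans_lt hQ)
      obtain ⟨q, hq⟩ := exists_isLUB_of_mk_lt_cof hu
      let Γ (i : ι) : P := @Classical.epsilon P ⟨q⟩ fun γ => D (sups y u i) γ
      obtain ⟨b, hb⟩ := exists_forall_lt_of_mk_lt_cof (B := insert q (range Γ))
        (mk_insert_le.trans_lt (add_lt_of_lt hcof (mk_range_le.trans_lt hι)
          (one_lt_aleph0.trans_le hcof)))
      obtain ⟨p, hp, hbp⟩ := hX b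
      refine ⟨p, hp, fun q' hq' => ?_, fun i hi => ?_⟩
      · exact hq'.unique hq ▸ (hb _ (mem_insert _ _)).trans_le hbp
      · exact hD _ _ _ (Classical.epsilon_spec hi)
          ((hb _ (mem_insert_of_mem _ ⟨i, rfl⟩)).le.trans hbp)
  have hlub : ∀ y, ∃ q, IsLUB (x '' Iio y) q := fun y =>
    exists_isLUB_of_mk_lt_cof (mk_image_le.trans_lt ((mk_set_le _).trans_lt hQ))
  choose ζ hζ using hlub
  have hsups : ∀ y i, sups y (fun z => x z) i = ζ '' (C i ∩ Iic y) := by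
    intro y i
    ext q
    constructor
    · rintro ⟨w, hwC, hwy, hq⟩
      exact ⟨w, ⟨hwC, hwy⟩, (hζ w).unique (image_restrict_Iio hwy ▸ hq)⟩
    · rintro ⟨w, ⟨hwC, hwy⟩, rfl⟩
      exact ⟨w, hwC, hwy, (image_restrict_Iio hwy).symm ▸ hζ w⟩
  refine ⟨x, ζ, fun y => (hx y).1, hζ, fun y => (hx y).2.1 _ ?_, fun y i => ?_⟩
  · rw [← image_eq_range]
    exact hζ y
  · rw [← hsups]
    exact (hx y).2.2 i

end Recursion

section ClubIncreasing

variable {P A : Type v} {L : Type*} [LinearOrder P] [Preorder L]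

/-- `f β` is below `f γ` along the filter `l`, uniformly in `β ∈ B`. -/
def UniformlyBelow (l : Filter A) (f : P → A → L) (B : Set P) (γ : P) : Prop :=
  ∀ᶠ a in l, ∀ β ∈ B, f β a < f γ a

/-- A family of functions that increases modulo `l`, uniformly along some club of every index `δ`
of small cofinality. The latter is encoded by asking for a club of size `< κ` in `Iio δ`. -/
structure IsClubIncreasing (κ : Cardinal.{v}) (l : Filter A) (f : P → A → L) : Prop where
  eventually_lt : ∀ β γ, β < γ → ∀ᶠ a in l, f β a < f γ a
  uniformlyBelow : ∀ δ, (∃ E : Set (Iio δ), IsClub E ∧ #E < κ) →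
    ∃ E : Set (Iio δ), IsClub E ∧ UniformlyBelow l f (Subtype.val '' E) δ

/-- Every cofinal set of indices contains an increasing `θ`-sequence along which almost all
coordinates of `f` are strictly increasing. -/
def HasStronglyIncreasingSubseq (l : Filter A) (f : P → A → L) (θ : Cardinal.{v}) : Prop :=
  ∀ X : Set P, IsCofinal X → ∃ e : θ.ord.ToType → P, StrictMono e ∧ (∀ ξ, e ξ ∈ X) ∧
    ∀ᶠ a in l, StrictMono fun ξ => f (e ξ) a

theorem exists_isNormal_Iio_of_isLUB {Q : Type*} [LinearOrder Q] [NoMaxOrder Q] {ζ : Q → P}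
    (hζ : Order.IsNormal ζ) {δ : P} (hδ : IsLUB (range ζ) δ) :
    ∃ ζ' : Q → Iio δ, Order.IsNormal ζ' ∧ IsCofinal (range ζ') ∧ ∀ y, (ζ' y : P) = ζ y := by
  have hlt : ∀ y, ζ y < δ := fun y =>
    have ⟨y', hy'⟩ := exists_gt y
    (hζ.strictMono hy').trans_le (hδ.1 ⟨y', rfl⟩)
  refine ⟨fun y => ⟨ζ y, hlt y⟩, ⟨fun _ _ h => hζ.strictMono h, fun {y} hy b hb => ?_⟩, ?_,
    fun _ => rfl⟩
  · refine hζ.mem_lowerBounds_upperBounds_of_isSuccLimit hy ?_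
    rintro _ ⟨z, hz, rfl⟩
    exact hb ⟨z, hz, rfl⟩
  · rintro ⟨p, hp⟩
    obtain ⟨_, ⟨y, rfl⟩, hy⟩ := (lt_isLUB_iff hδ).1 hp
    exact ⟨_, ⟨y, rfl⟩, hy.le⟩

theorem exists_strictMono_eventually_forall [LinearOrder A] [Nonempty A] {θ : Cardinal.{v}}
    (hθ : θ.IsRegular) (hA : #A < θ) {p : θ.ord.ToType → A → Prop}
    (hp : ∀ ξ, ∀ᶠ a in atTop, p ξ a) :
    ∃ e : θ.ord.ToType → θ.ord.ToType, StrictMono e ∧ ∀ᶠ a in atTop, ∀ ξ, p (e ξ) a := by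
  choose n hn using fun ξ => eventually_atTop.1 (hp ξ)
  obtain ⟨m, e, he, hem⟩ := exists_strictMono_forall_eq hθ hA n
  exact ⟨e, he, (eventually_ge_atTop m).mono fun a ha ξ => hn _ a (hem ξ ▸ ha)⟩

namespace IsClubIncreasing

variable {κ : Cardinal.{v}} {l : Filter A} {f : P → A → L}

theorem eventually_le (H : IsClubIncreasing κ l f) {β γ : P} (h : β ≤ γ) : f β ≤ᶠ[l] f γ := by
  rcases h.eq_or_lt with rfl | h
  · exact EventuallyLE.rfl
  · exact (H.eventually_lt β γ h).mono fun _ => le_of_lt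

theorem exists_uniformlyBelow_preimage {Q : Type v} [LinearOrder Q] [WellFoundedLT Q]
    [NoMaxOrder Q] [WellFoundedLT P] (H : IsClubIncreasing κ l f) (hQκ : #Q < κ)
    (hQ : Order.cof Q ≠ ℵ₀) {ζ : Q → P} (hζ : Order.IsNormal ζ) {δ : P}
    (hδ : IsLUB (range ζ) δ) : ∃ E, IsClub E ∧ UniformlyBelow l f (ζ '' E) δ := by
  obtain ⟨ζ', hζ', hcof, hval⟩ := exists_isNormal_Iio_of_isLUB hζ hδ
  obtain ⟨E, hE, hEδ⟩ := H.uniformlyBelow δ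
    ⟨_, isClub_range_of_isNormal hζ' hcof, mk_range_le.trans_lt hQκ⟩
  refine ⟨ζ' ⁻¹' E, isClub_preimage_of_isNormal hζ' hcof hQ hE, hEδ.mono fun a ha => ?_⟩
  rintro _ ⟨y, hy, rfl⟩
  exact ha _ ⟨ζ' y, hy, hval y⟩

-- Club guessing on `θ⁺⁺` catches the set of indices where the bounds are uniform, although that
-- set is known only once the interleaved sequence has been built.
theorem exists_seq_uniformlyBelow [WellFoundedLT P] (H : IsClubIncreasing κ l f)
    (hκP : κ < Order.cof P) {θ : Cardinal.{v}} (hθ : θ.IsRegular)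
    (hθκ : Order.succ (Order.succ θ) < κ) {X : Set P} (hX : IsCofinal X) :
    ∃ x ζ : θ.ord.ToType → P, StrictMono x ∧ (∀ ξ, x ξ ∈ X) ∧ (∀ ξ η, ξ < η → x ξ ≤ ζ η) ∧
      ∀ η, ∀ᶠ a in l, ∀ ξ ≤ η, f (ζ ξ) a < f (x η) a := by
  have hθ' : (Order.succ (Order.succ θ)).IsRegular :=
    isRegular_succ (hθ.aleph0_le.trans (Order.le_succ θ))
  let Q := (Order.succ (Order.succ θ)).ord.ToType
  have : NoMaxOrder Q := Cardinal.noMaxOrder hθ'.aleph0_le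
  have hcofQ : Order.cof Q = Order.succ (Order.succ θ) := cof_ord_toType hθ'
  have hQκ : #Q < κ := by simpa [Q] using hθκ
  have hℵ₀ : ℵ₀ < Order.cof Q := by
    rw [hcofQ]
    exact hθ.aleph0_le.trans_lt ((Order.lt_succ _).trans (Order.lt_succ _))
  obtain ⟨C, hC⟩ := exists_club_guessing (Q := Q) hθ (by rw [hcofQ]; exact Order.lt_succ _)
  obtain ⟨x, ζ, hxX, hζx, hlt, hguided⟩ := exists_interleaved_seq (hQκ.trans hκP)
    (hQκ.trans hκP) (hℵ₀.le.trans (Order.cof_le_cardinalMk Q) |>.trans (hQκ.trans hκP).le) hX C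
    (D := UniformlyBelow l f) fun B γ γ' h hle => by
      filter_upwards [h, H.eventually_le hle] with a ha ha' β hβ using (ha β hβ).trans_le ha'
  have hxζ : ∀ z y, z < y → x z ≤ ζ y := fun z y h => (hζx y).1 ⟨z, h, rfl⟩
  obtain ⟨δ, hδ⟩ : ∃ δ, IsLUB (range ζ) δ :=
    exists_isLUB_of_mk_lt_cof (mk_range_le.trans_lt (hQκ.trans hκP))
  obtain ⟨E, hE, hEδ⟩ := H.exists_uniformlyBelow_preimage hQκ hℵ₀.ne'
    (isNormal_of_isLUB_image_Iio hζx hlt) hδ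
  obtain ⟨α, hαE, hα⟩ := hC E hE
  obtain ⟨e, he, heα⟩ := exists_strictMono_of_le_mk hα
  refine ⟨x ∘ e, ζ ∘ e, fun ξ η h => (hxζ _ _ (he h)).trans_lt (hlt _), fun ξ => hxX _,
    fun ξ η h => hxζ _ _ (he h), fun η => ?_⟩
  have hbelow : UniformlyBelow l f (ζ '' (C α ∩ Iic (e η))) (x (e η)) :=
    hguided _ α ⟨δ, hEδ.mono fun a ha β hβ =>
      ha β (image_mono (inter_subset_left.trans hαE) hβ)⟩
  exact hbelow.mono fun a ha ξ hξ => ha _ ⟨_, ⟨heα ξ, he.monotone hξ⟩, rfl⟩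

theorem hasStronglyIncreasingSubseq [WellFoundedLT P] [LinearOrder A] [Nonempty A]
    (H : IsClubIncreasing κ atTop f) (hκP : κ < Order.cof P) {θ : Cardinal.{v}}
    (hθ : θ.IsRegular) (hA : #A < θ) (hθκ : Order.succ (Order.succ θ) < κ) :
    HasStronglyIncreasingSubseq atTop f θ := by
  intro X hX
  have := Cardinal.noMaxOrder hθ.aleph0_le
  obtain ⟨x, ζ, hx, hxX, hxζ, hζx⟩ := H.exists_seq_uniformlyBelow hκP hθ hθκ hX
  obtain ⟨e, he, hea⟩ := exists_strictMono_eventually_forall hθ hA fun η =>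
    (hζx η).and (H.eventually_le (hxζ η _ (Order.lt_succ η)))
  refine ⟨x ∘ e, hx.comp he, fun ξ => hxX _, hea.mono fun a ha ξ η hξη => ?_⟩
  exact (ha ξ).2.trans_lt ((ha η).1 _ (Order.succ_le_of_lt (he hξη)))

end IsClubIncreasing

end ClubIncreasing

/-! ### Least upper bounds modulo a filter -/

section EventualLUB

variable {P A L : Type v} [LinearOrder P] [LinearOrder L] {l : Filter A} {f : P → A → L}

/-- The least element of `T` that is at least `x`; a junk value if there is none. -/
noncomputable def proj (T : Set L) (x : L) : L :=
  @Classical.epsilon L ⟨x⟩ fun y => IsLeast (T ∩ Ici x) y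

theorem isLeast_proj [WellFoundedLT L] {T : Set L} {x : L} (h : (T ∩ Ici x).Nonempty) :
    IsLeast (T ∩ Ici x) (proj T x) :=
  Classical.epsilon_spec (p := fun y => IsLeast (T ∩ Ici x) y) (exists_isLeast h)

theorem proj_le_proj [WellFoundedLT L] {T T' : Set L} {x x' : L} (hT : T' ⊆ T) (hx : x ≤ x')
    (h : (T' ∩ Ici x').Nonempty) : proj T x ≤ proj T' x' := by
  have hsub : T' ∩ Ici x' ⊆ T ∩ Ici x := inter_subset_inter hT (Ici_subset_Ici.2 hx)
  exact (isLeast_proj h).mono (isLeast_proj (h.mono hsub)) hsub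

/-- `g` is a least upper bound of the family `f` in the order of eventual domination along `l`. -/
structure IsEventualLUB (l : Filter A) (f : P → A → L) (g : A → L) : Prop where
  eventuallyLE : ∀ γ, f γ ≤ᶠ[l] g
  eventuallyLE_of_forall : ∀ h, (∀ γ, f γ ≤ᶠ[l] h) → g ≤ᶠ[l] h

theorem exists_forall_eventually_le_proj [WellFoundedLT P] [IsRegularCardinalOrder P]
    [WellFoundedLT L] (hf : ∀ β γ, β ≤ γ → f β ≤ᶠ[l] f γ) {θ : Cardinal.{v}}
    (hθ : θ.IsRegular) (hA : #A < θ) (hstar : HasStronglyIncreasingSubseq l f θ)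
    {T : A → Set L} (hT : ∀ a, #(T a) < θ) (hub : ∀ γ, ∀ᶠ a in l, (T a ∩ Ici (f γ a)).Nonempty) :
    ∃ β, ∀ γ, ∀ᶠ a in l, f γ a ≤ proj (T a) (f β a) := by
  by_contra! hcon
  obtain ⟨X, hX, hXlt⟩ := exists_isCofinal_pairwise
    (R := fun β γ => ∃ᶠ a in l, proj (T a) (f β a) < f γ a) (by simpa using hcon)
    fun β γ γ' h hle => (h.and_eventually (hf γ γ' hle)).mono fun a ha => ha.1.trans_le ha.2
  obtain ⟨e, he, heX, hmono⟩ := hstar X hX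
  have := Cardinal.noMaxOrder hθ.aleph0_le
  have hjump : ∀ ξ, ∃ a, proj (T a) (f (e ξ) a) < f (e (Order.succ ξ)) a ∧
      (T a ∩ Ici (f (e ξ) a)).Nonempty ∧ StrictMono fun ξ => f (e ξ) a := fun ξ =>
    ((hXlt _ (heX ξ) _ (heX _) (he (Order.lt_succ ξ))).and_eventually
      ((hub (e ξ)).and hmono)).exists
  choose M hMlt hMne hMmono using hjump
  obtain ⟨a, d, hd, hda⟩ := exists_strictMono_forall_eq hθ hA M
  have hproj : ∀ ξ, IsLeast (T a ∩ Ici (f (e (d ξ)) a)) (proj (T a) (f (e (d ξ)) a)) :=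
    fun ξ => isLeast_proj (hda ξ ▸ hMne (d ξ))
  let p (ξ : θ.ord.ToType) : T a := ⟨_, (hproj ξ).1.1⟩
  have hp : StrictMono p := fun ξ η h => calc
    proj (T a) (f (e (d ξ)) a) < f (e (Order.succ (d ξ))) a := by
      simpa only [hda] using hMlt (d ξ)
    _ ≤ f (e (d η)) a := (hda ξ ▸ hMmono (d ξ)).monotone (Order.succ_le_of_lt (hd h))
    _ ≤ proj (T a) (f (e (d η)) a) := (hproj η).1.2
  exact (hT a).not_ge (by simpa using mk_le_of_injective hp.injective)

theorem exists_forall_frequently_lt_proj [WellFoundedLT P] [IsRegularCardinalOrder P]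
    [WellFoundedLT L] (hf : ∀ β γ, β ≤ γ → f β ≤ᶠ[l] f γ) {θ : Cardinal.{v}}
    (hθ : θ.IsRegular) (hA : #A < θ) (hstar : HasStronglyIncreasingSubseq l f θ)
    (hno : ¬ ∃ g, IsEventualLUB l f g) {T : A → Set L} (hT : ∀ a, #(T a) < θ)
    (hub : ∀ γ a, (T a ∩ Ici (f γ a)).Nonempty) :
    ∃ h, (∀ γ, f γ ≤ᶠ[l] h) ∧ ∃ β, ∀ γ, β ≤ γ → ∃ᶠ a in l, h a < proj (T a) (f γ a) := by
  obtain ⟨β, hβ⟩ := exists_forall_eventually_le_proj hf hθ hA hstar hT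
    fun γ => Eventually.of_forall (hub γ)
  obtain ⟨h, hh, hlt⟩ : ∃ h, (∀ γ, f γ ≤ᶠ[l] h) ∧ ¬ (fun a => proj (T a) (f β a)) ≤ᶠ[l] h := by
    by_contra! hcon
    exact hno ⟨_, hβ, hcon⟩
  refine ⟨h, hh, β, fun γ hγ => ?_⟩
  have hlt' : ∃ᶠ a in l, h a < proj (T a) (f β a) := by
    simpa [EventuallyLE, not_eventually] using hlt
  exact (hlt'.and_eventually (hf β γ hγ)).mono fun a ha =>
    ha.1.trans_le (proj_le_proj subset_rfl ha.2 (hub γ a))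

-- Otherwise each of `ρ` successive upper bounds undercuts, at some coordinate, the projection of
-- `f β` to the previous ones. But at each coordinate these projections decrease, so stabilise.
theorem exists_isEventualLUB [WellFoundedLT P] [IsRegularCardinalOrder P] [WellFoundedLT L]
    (hf : ∀ β γ, β ≤ γ → f β ≤ᶠ[l] f γ) {ρ : Cardinal.{v}} (hρ : ρ.IsRegular) (hA : #A < ρ)
    (hρP : ρ < Order.cof P) (hstar : HasStronglyIncreasingSubseq l f (Order.succ ρ))
    {g₀ : A → L} (hg₀ : ∀ γ a, f γ a ≤ g₀ a) : ∃ g, IsEventualLUB l f g := by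
  by_contra hno
  have := nonempty_ord_toType hρ.aleph0_le
  have := Cardinal.noMaxOrder hρ.aleph0_le
  let T (y : ρ.ord.ToType) (u : Iio y → A → L) (a : A) : Set L :=
    insert (g₀ a) (range fun z => u z a)
  have hT : ∀ y u a, #(T y u a) < Order.succ ρ := fun y u a =>
    Order.lt_succ_of_le <| mk_insert_le.trans <| add_le_of_le hρ.aleph0_le
      (mk_range_le.trans (mk_Iio_ord_toType_lt y).le) (one_le_aleph0.trans hρ.aleph0_le)
  have hub : ∀ y u γ a, (T y u a ∩ Ici (f γ a)).Nonempty := fun y u γ a =>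
    ⟨g₀ a, mem_insert _ _, hg₀ γ a⟩
  obtain ⟨h, hh⟩ := exists_forall_rel_restrict (Q := ρ.ord.ToType) (P := A → L)
    (fun y u h => (∀ γ, f γ ≤ᶠ[l] h) ∧
      ∃ β, ∀ γ, β ≤ γ → ∃ᶠ a in l, h a < proj (T y u a) (f γ a))
    fun y u => exists_forall_frequently_lt_proj hf (isRegular_succ hρ.aleph0_le)
      (hA.trans (Order.lt_succ ρ)) hstar hno (hT y u) (hub y u)
  choose hle b hb using hh
  obtain ⟨β, hβ⟩ := exists_forall_lt_of_mk_lt_cof (B := range b)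
    (mk_range_le.trans_lt (by simpa using hρP))
  have hTmono : ∀ a, Monotone fun y => T y (fun z => h z) a := by
    intro a y y' hy
    refine insert_subset_insert ?_
    rintro _ ⟨z, rfl⟩
    exact ⟨⟨z, z.2.trans_le hy⟩, rfl⟩
  choose st hst using fun a => exists_forall_ge_eq_of_antitone
    (h := fun y => proj (T y (fun z => h z) a) (f β a))
    fun y y' hy => proj_le_proj (hTmono a hy) le_rfl (hub y _ β a)
  obtain ⟨y, hy⟩ := exists_forall_lt_of_mk_lt_cof (B := range st)
    (by rw [cof_ord_toType hρ]; exact mk_range_le.trans_lt hA)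
  obtain ⟨a, hlt, hle'⟩ := ((hb y β (hβ _ ⟨y, rfl⟩).le).and_eventually (hle y β)).exists
  have hya : st a ≤ y := (hy _ ⟨a, rfl⟩).le
  have hmem : h y a ∈ T (Order.succ y) (fun z => h z) a ∩ Ici (f β a) :=
    ⟨mem_insert_of_mem _ ⟨⟨y, Order.lt_succ y⟩, rfl⟩, hle'⟩
  rw [hst a y hya, ← hst a _ (hya.trans (Order.le_succ y))] at hlt
  exact hlt.not_ge ((isLeast_proj ⟨_, hmem⟩).2 hmem)

end EventualLUB

/-! ### Decomposability -/

section Decomposability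

variable {S : Type u} {U : Ultrafilter S}

theorem decomposable_iff {μ : Cardinal.{v}} {L : Type v} (hL : #L = μ) :
    Decomposable U μ ↔ ∃ x : S → L, ∀ X : Set L, #X < μ → ¬ ∀ᶠ s in U, x s ∈ X := by
  obtain ⟨e⟩ := Cardinal.eq.1 (hL.trans (mk_out μ).symm)
  constructor
  · rintro ⟨f, hf⟩
    exact ⟨e.symm ∘ f, fun X hX => hf (e.symm ⁻¹' X)
      ((mk_preimage_of_injective _ _ e.symm.injective).trans_lt hX)⟩
  · rintro ⟨x, hx⟩
    exact ⟨e ∘ x, fun X hX => hx (e ⁻¹' X)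
      ((mk_preimage_of_injective _ _ e.injective).trans_lt hX)⟩

theorem decomposable_iff_exists_tendsto {μ : Cardinal.{v}} (hμ : μ.IsRegular) :
    Decomposable U μ ↔ ∃ x : S → μ.ord.ToType, Tendsto x U atTop := by
  rw [decomposable_iff (mk_ord_toType μ)]
  refine exists_congr fun x => ⟨fun hx => tendsto_atTop.2 fun b => ?_, fun hx X hX hU => ?_⟩
  · have hb := Ultrafilter.eventually_not.2 (hx (Iio b) (mk_Iio_ord_toType_lt b))
    exact hb.mono fun _ hs => not_lt.1 hs
  · obtain ⟨b, hb⟩ := exists_forall_lt_of_mk_lt_cof (hX.trans_eq (cof_ord_toType hμ).symm)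
    obtain ⟨s, hs, hbs⟩ := (hU.and (hx.eventually_ge_atTop b)).exists
    exact (hb _ hs).not_ge hbs

theorem not_eventually_mem_of_isEventualLUB {P A L : Type v} [LinearOrder P] [WellFoundedLT P]
    [IsRegularCardinalOrder P] [LinearOrder L] [WellFoundedLT L] {l : Filter A} {f : P → A → L}
    (hf : ∀ β γ, β ≤ γ → f β ≤ᶠ[l] f γ) {g : A → L} (hg : IsEventualLUB l f g) {θ : Cardinal.{v}}
    (hθ : θ.IsRegular) (hA : #A < θ) (hstar : HasStronglyIncreasingSubseq l f θ) {F : S → A}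
    (hF : Tendsto F U l) {x : S → L} (hfx : ∀ β, ∀ᶠ s in U, f β (F s) < x s)
    (hxg : ∀ᶠ s in U, x s < g (F s)) {X : Set L} (hX : #X < θ) : ¬ ∀ᶠ s in U, x s ∈ X := by
  intro hxX
  have hinsert : ∀ a, #(insert (g a) X : Set L) < θ := fun a =>
    mk_insert_le.trans_lt (add_lt_of_lt hθ.aleph0_le hX (one_lt_aleph0.trans_le hθ.aleph0_le))
  obtain ⟨β, hβ⟩ := exists_forall_eventually_le_proj hf hθ hA hstar hinsert
    fun γ => (hg.eventuallyLE γ).mono fun a ha => ⟨g a, mem_insert _ _, ha⟩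
  obtain ⟨s, hsX, hsg, hsβ, hgle⟩ := (hxX.and (hxg.and ((hfx β).and
    (hF.eventually (hg.eventuallyLE_of_forall _ hβ))))).exists
  have hmem : x s ∈ insert (g (F s)) X ∩ Ici (f β (F s)) := ⟨mem_insert_of_mem _ hsX, hsβ.le⟩
  exact hsg.not_ge (hgle.trans ((isLeast_proj ⟨_, hmem⟩).2 hmem))

variable {P A : Type v} [LinearOrder P] [WellFoundedLT P] [LinearOrder A]

theorem exists_forall_eventuallyLE_of_not_decomposable [IsRegularCardinalOrder P]
    {μ : Cardinal.{v}} (hμ : μ.IsRegular) (hA : #A < μ) (hμU : ¬ Decomposable U μ)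
    {I : P → S → A} (hI : ∀ β γ, β ≤ γ → I β ≤ᶠ[U] I γ)
    (hmono : ∀ X : Set P, IsCofinal X → ∃ e : μ.ord.ToType → P, StrictMono e ∧ (∀ ξ, e ξ ∈ X) ∧
      ∀ᶠ s in U, Monotone fun ξ => I (e ξ) s) :
    ∃ β, ∀ γ, I γ ≤ᶠ[U] I β := by
  by_contra! hcon
  obtain ⟨X, hX, hXlt⟩ := exists_isCofinal_pairwise (R := fun β γ => ∀ᶠ s in U, I β s < I γ s)
    (by simpa [EventuallyLE, ← Ultrafilter.eventually_not] using hcon)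
    fun β γ γ' h hle => (h.and (hI γ γ' hle)).mono fun s hs => hs.1.trans_le hs.2
  obtain ⟨e, he, heX, heI⟩ := hmono X hX
  have := nonempty_ord_toType hμ.aleph0_le
  have := Cardinal.noMaxOrder hμ.aleph0_le
  let x (s : S) : μ.ord.ToType :=
    Classical.epsilon fun x => ∀ y, x ≤ y → I (e y) s = I (e x) s
  have hx : ∀ s, (Monotone fun ξ => I (e ξ) s) → ∀ y, x s ≤ y → I (e y) s = I (e (x s)) s :=
    fun s hs => Classical.epsilon_spec (exists_forall_ge_eq_of_monotone hμ hA hs)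
  obtain ⟨ξ, hξ⟩ : ∃ ξ, ¬ ∀ᶠ s in U, ξ ≤ x s := by
    by_contra! h
    exact hμU ((decomposable_iff_exists_tendsto hμ).2 ⟨x, tendsto_atTop.2 h⟩)
  obtain ⟨s, hs, hlt, hxξ⟩ := (heI.and ((hXlt _ (heX ξ) _ (heX _) (he (Order.lt_succ ξ))).and
    (Ultrafilter.eventually_not.2 hξ))).exists
  have hxξ' : x s ≤ ξ := (not_le.1 hxξ).le
  rw [hx s hs ξ hxξ', hx s hs _ (hxξ'.trans (Order.le_succ ξ))] at hlt
  exact lt_irrefl _ hlt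

/-- The least index `≥ n` from which on `f` is below `g`; a junk value if there is none. -/
noncomputable def threshold {L : Type*} [LT L] (f g : A → L) (n : A) : A :=
  @Classical.epsilon A ⟨n⟩ fun m => IsLeast {m | n ≤ m ∧ ∀ m', m ≤ m' → f m' < g m'} m

theorem isLeast_threshold [WellFoundedLT A] {L : Type*} [LT L] {f g : A → L} {n : A}
    (h : {m | n ≤ m ∧ ∀ m', m ≤ m' → f m' < g m'}.Nonempty) :
    IsLeast {m | n ≤ m ∧ ∀ m', m ≤ m' → f m' < g m'} (threshold f g n) :=
  Classical.epsilon_spec (p := fun m => IsLeast {m | n ≤ m ∧ ∀ m', m ≤ m' → f m' < g m'} m)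
    (exists_isLeast h)

theorem threshold_le_threshold [WellFoundedLT A] {L : Type*} [Preorder L] {f f' g : A → L} {n : A}
    (hf : ∀ m, n ≤ m → f m ≤ f' m) (h : {m | n ≤ m ∧ ∀ m', m ≤ m' → f' m' < g m'}.Nonempty) :
    threshold f g n ≤ threshold f' g n := by
  have hsub : {m | n ≤ m ∧ ∀ m', m ≤ m' → f' m' < g m'} ⊆
      {m | n ≤ m ∧ ∀ m', m ≤ m' → f m' < g m'} := fun m hm =>
    ⟨hm.1, fun m' hm' => (hf m' (hm.1.trans hm')).trans_lt (hm.2 m' hm')⟩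
  exact (isLeast_threshold h).mono (isLeast_threshold (h.mono hsub)) hsub

theorem exists_tendsto_forall_eventually_forall_ge_lt [IsRegularCardinalOrder P] [NoMaxOrder P]
    [WellFoundedLT A] {L : Type*} [Preorder L] {f : P → A → L}
    (hf : ∀ β γ, β < γ → ∀ᶠ a in atTop, f β a < f γ a) {μ : Cardinal.{v}} (hμ : μ.IsRegular)
    (hμP : μ < Order.cof P) (hA : #A < μ) (hμU : ¬ Decomposable U μ)
    (hstar : HasStronglyIncreasingSubseq atTop f μ) {i : S → A} (hi : Tendsto i U atTop)
    {r : S → P} (hr : Tendsto r U atTop) :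
    ∃ F : S → A, Tendsto F U atTop ∧
      ∀ β, ∀ᶠ s in U, ∀ m, F s ≤ m → f β m < f (r s) m := by
  have hne : ∀ β s, β < r s →
      {m | i s ≤ m ∧ ∀ m', m ≤ m' → f β m' < f (r s) m'}.Nonempty := fun β s h =>
    have : Nonempty A := ⟨i s⟩
    ((eventually_ge_atTop (i s)).and (eventually_forall_ge_atTop.2 (hf β _ h))).exists
  let I (β : P) (s : S) : A := threshold (f β) (f (r s)) (i s)
  have hIle : ∀ β γ, β ≤ γ → I β ≤ᶠ[U] I γ := by
    intro β γ h
    rcases h.eq_or_lt with rfl | h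
    · exact EventuallyLE.rfl
    filter_upwards [hi.eventually_forall_ge_atTop (hf β γ h),
      hr.eventually_gt_atTop γ] with s hs hγ
    exact threshold_le_threshold (fun m hm => (hs m hm).le) (hne γ s hγ)
  have hImono : ∀ X : Set P, IsCofinal X → ∃ e : μ.ord.ToType → P, StrictMono e ∧
      (∀ ξ, e ξ ∈ X) ∧ ∀ᶠ s in U, Monotone fun ξ => I (e ξ) s := by
    intro X hX
    obtain ⟨e, he, heX, hmono⟩ := hstar X hX
    obtain ⟨b, hb⟩ := exists_forall_lt_of_mk_lt_cof (B := range e)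
      (mk_range_le.trans_lt (by simpa using hμP))
    refine ⟨e, he, heX, ?_⟩
    filter_upwards [hi.eventually_forall_ge_atTop hmono,
      hr.eventually_gt_atTop b] with s hs hbs ξ η h
    exact threshold_le_threshold (fun m hm => (hs m hm).monotone h)
      (hne _ s ((hb _ ⟨η, rfl⟩).trans hbs))
  obtain ⟨β₀, hβ₀⟩ := exists_forall_eventuallyLE_of_not_decomposable hμ hA hμU hIle hImono
  refine ⟨I β₀, tendsto_atTop_mono' _ ?_ hi, fun β => ?_⟩
  · exact (hr.eventually_gt_atTop β₀).mono fun s hs => (isLeast_threshold (hne β₀ s hs)).1.1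
  · filter_upwards [hβ₀ β, hr.eventually_gt_atTop β] with s hs hβ m hm
    exact (isLeast_threshold (hne β s hβ)).1.2 m (hs.trans hm)

theorem decomposable_of_isClubIncreasing [IsRegularCardinalOrder P] [NoMaxOrder P]
    [WellFoundedLT A] {κ : Cardinal.{v}} (hκ : ℵ₀ < κ) (hκlim : Order.IsSuccLimit κ)
    (hκP : κ < Order.cof P) (hA : #A < κ) {f : P → A → κ.ord.ToType}
    (H : IsClubIncreasing κ atTop f) {g₀ : A → κ.ord.ToType} (hg₀ : ∀ γ a, f γ a ≤ g₀ a)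
    {i : S → A} (hi : Tendsto i U atTop) {r : S → P} (hr : Tendsto r U atTop) {μ : Cardinal.{v}}
    (hμ : μ.IsRegular) (hAμ : #A < μ) (hμκ : μ < κ) (hμU : ¬ Decomposable U μ) :
    Decomposable U κ := by
  have : Nonempty A := have ⟨s⟩ := U.neBot.nonempty; ⟨i s⟩
  have hle : ∀ β γ, β ≤ γ → f β ≤ᶠ[atTop] f γ := fun _ _ => H.eventually_le
  have hstar : ∀ θ : Cardinal.{v}, θ.IsRegular → #A < θ → θ < κ →
      HasStronglyIncreasingSubseq atTop f θ := fun θ hθ hAθ hθκ =>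
    H.hasStronglyIncreasingSubseq hκP hθ hAθ (hκlim.succ_lt (hκlim.succ_lt hθκ))
  have hsucc : ∀ c < κ, ∃ θ : Cardinal.{v}, θ.IsRegular ∧ #A < θ ∧ c < θ ∧ θ < κ := fun c hc =>
    ⟨_, isRegular_succ ((le_max_left ℵ₀ (max #A c))),
      Order.lt_succ_of_le ((le_max_left _ _).trans (le_max_right _ _)),
      Order.lt_succ_of_le ((le_max_right _ _).trans (le_max_right _ _)),
      hκlim.succ_lt (max_lt hκ (max_lt hA hc))⟩
  obtain ⟨ρ, hρ, hAρ, -, hρκ⟩ := hsucc _ hκ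
  obtain ⟨g, hg⟩ := exists_isEventualLUB hle hρ hAρ (hρκ.trans hκP)
    (hstar _ (isRegular_succ hρ.aleph0_le) (hAρ.trans (Order.lt_succ ρ)) (hκlim.succ_lt hρκ)) hg₀
  obtain ⟨F, hF, hFlt⟩ := exists_tendsto_forall_eventually_forall_ge_lt H.eventually_lt hμ
    (hμκ.trans hκP) hAμ hμU (hstar μ hμ hAμ hμκ) hi hr
  have hbelow : ∀ s, ∀ᶠ a in atTop, f (r s) a < g a := fun s => by
    obtain ⟨γ, hγ⟩ := exists_gt (r s)
    filter_upwards [H.eventually_lt _ _ hγ, hg.eventuallyLE γ] with a ha ha' using ha.trans_le ha'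
  choose N hN using fun s => eventually_atTop.1 (hbelow s)
  refine (decomposable_iff (mk_ord_toType κ)).2
    ⟨fun s => f (r s) (max (F s) (N s)), fun X hX => ?_⟩
  obtain ⟨θ, hθ, hAθ, hXθ, hθκ⟩ := hsucc _ hX
  exact not_eventually_mem_of_isEventualLUB hle hg hθ hAθ (hstar θ hθ hAθ hθκ)
    (tendsto_atTop_mono (fun s => le_max_left _ _) hF)
    (fun β => (hFlt β).mono fun s hs => hs _ (le_max_left _ _))
    (Eventually.of_forall fun s => hN s _ (le_max_right _ _)) hXθ

end Decomposability

/-! ### Filtrations of the proper initial segments of a successor cardinal -/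

section Filtration

variable {P A : Type v} [LinearOrder P] [LinearOrder A]

/-- For every `δ`, an increasing exhaustion of `Iio δ` by sets `T δ a` of cardinality at most `k a`,
one of which covers a club of `δ` whenever there is a club of cardinality `< κ`. -/
structure IsClubFiltration (κ : Cardinal.{v}) (k : A → Cardinal.{v}) (T : P → A → Set P) :
    Prop where
  subset_Iio : ∀ δ a, T δ a ⊆ Iio δ
  monotone : ∀ δ, Monotone (T δ)
  exists_mem : ∀ β δ, β < δ → ∃ a, β ∈ T δ a
  mk_le : ∀ δ a, #(T δ a) ≤ k a
  exists_isClub : ∀ δ, (∃ E : Set (Iio δ), IsClub E ∧ #E < κ) →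
    ∃ E : Set (Iio δ), IsClub E ∧ ∃ a, Subtype.val '' E ⊆ T δ a

theorem exists_monotone_iUnion_eq_univ {κ : Cardinal.{v}} {C : Set κ.ord.ToType}
    (hC : IsCofinal C) {B : Type v} (hB : #B ≤ κ) :
    ∃ T : C → Set B, Monotone T ∧ ⋃ a, T a = Set.univ ∧
      ∀ a : C, #(T a) ≤ #(Iic (a : κ.ord.ToType)) := by
  obtain ⟨j⟩ : #B ≤ #κ.ord.ToType := by simpa using hB
  refine ⟨fun a => j ⁻¹' Iic a.1, fun a b h => preimage_mono (Iic_subset_Iic.2 h),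
    iUnion_eq_univ_iff.2 fun x => ?_, fun a => mk_preimage_of_injective _ _ j.injective⟩
  obtain ⟨y, hy, hxy⟩ := hC (j x)
  exact ⟨⟨y, hy⟩, hxy⟩

theorem exists_mem_le_mk_Iic {κ : Cardinal.{v}} {C : Set κ.ord.ToType} (hC : IsCofinal C)
    {c : Cardinal.{v}} (hc : c < κ) : ∃ a : C, c ≤ #(Iic (a : κ.ord.ToType)) := by
  have hcκ : c.ord < Ordinal.type (α := κ.ord.ToType) (· < ·) := by
    rwa [Ordinal.type_toType, ord_lt_ord]
  let x : κ.ord.ToType := Ordinal.enum (· < ·) ⟨c.ord, hcκ⟩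
  have hx : #(Iio x) = c :=
    (Ordinal.card_typein (r := fun y z : κ.ord.ToType => y < z) x).symm.trans <| by
      rw [Ordinal.typein_enum, card_ord]
  obtain ⟨y, hy, hxy⟩ := hC x
  exact ⟨⟨y, hy⟩, hx.symm.trans_le <|
    mk_le_mk_of_subset fun z hz => (le_of_lt hz).trans hxy⟩

theorem exists_isClubFiltration {κ : Cardinal.{v}} (hκ : ℵ₀ < κ) {C : Set κ.ord.ToType}
    (hC : IsCofinal C) (hP : ∀ δ : P, #(Iio δ) ≤ κ) :
    ∃ k : C → Cardinal.{v}, (∀ a, ℵ₀ ≤ k a) ∧ (∀ a, k a < κ) ∧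
      ∃ T : P → C → Set P, IsClubFiltration κ k T := by
  let k (a : C) : Cardinal.{v} := max ℵ₀ #(Iic (a : κ.ord.ToType))
  have hk : Monotone k := fun a b h =>
    max_le_max le_rfl (mk_le_mk_of_subset (Iic_subset_Iic.2 h))
  have hkκ : ∀ a, k a < κ := fun a => 
    max_lt hκ (by simpa using mk_Iic_lt a.1 (by simp) (by simpa using hκ.le))
  choose T hTmono hTcov hTmk using fun δ : P => exists_monotone_iUnion_eq_univ hC (hP δ)
  let E (δ : P) : Set (Iio δ) := Classical.epsilon fun E => IsClub E ∧ #E < κ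
  refine ⟨k, fun a => le_max_left _ _, hkκ,
    fun δ a => Subtype.val '' (T δ a ∪ {β ∈ E δ | #(E δ) ≤ k a}),
    fun δ a => Subtype.coe_image_subset _ _, fun δ a b h => image_mono <|
      union_subset_union (hTmono δ h) fun β hβ => ⟨hβ.1, hβ.2.trans (hk h)⟩,
    fun β δ h => ?_, fun δ a => ?_, fun δ h => ?_⟩
  · obtain ⟨a, ha⟩ := iUnion_eq_univ_iff.1 (hTcov δ) ⟨β, h⟩
    exact ⟨a, ⟨β, h⟩, Or.inl ha, rfl⟩
  · have hE : #{β ∈ E δ | #(E δ) ≤ k a} ≤ k a := by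
      by_cases h : #(E δ) ≤ k a
      · exact (mk_le_mk_of_subset (sep_subset _ _)).trans h
      · simp [h]
    exact mk_image_le.trans <| (mk_union_le _ _).trans <|
      add_le_of_le (le_max_left _ _) ((hTmk δ a).trans (le_max_right _ _)) hE
  · obtain ⟨hEclub, hEκ⟩ := Classical.epsilon_spec h
    obtain ⟨a, ha⟩ := exists_mem_le_mk_Iic hC hEκ
    exact ⟨E δ, hEclub, a, image_mono fun β hβ => Or.inr ⟨hβ, ha.trans (le_max_right _ _)⟩⟩

theorem rank_lt_ord_succ {P : Type v} {c : Cardinal.{v}} (hc : ℵ₀ ≤ c)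
    (R : P → P → Prop) [IsWellFounded P R] (hR : ∀ δ, #{β | R β δ} ≤ c) (δ : P) :
    IsWellFounded.rank R δ < (Order.succ c).ord := by
  induction δ using IsWellFounded.induction R with
  | ind δ ih =>
    rw [IsWellFounded.rank_eq]
    refine Ordinal.iSup_add_one_lt_of_lt_cof ?_ fun β => ih β β.2
    rw [(isRegular_succ hc).cof_ord]
    exact Order.lt_succ_of_le (hR δ)

theorem IsClubFiltration.exists_isClubIncreasing [WellFoundedLT P] {κ : Cardinal.{v}}
    (hκ : Order.IsSuccLimit κ) {k : A → Cardinal.{v}} (hk₀ : ∀ a, ℵ₀ ≤ k a)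
    (hkκ : ∀ a, k a < κ) {T : P → A → Set P} (hT : IsClubFiltration κ k T) :
    ∃ f : P → A → κ.ord.ToType, IsClubIncreasing κ atTop f ∧
      ∃ g₀ : A → κ.ord.ToType, ∀ γ a, f γ a ≤ g₀ a := by
  have hwf : ∀ a, IsWellFounded P fun β δ => β ∈ T δ a := fun a =>
    ⟨Subrelation.wf (r := (· < ·)) (fun h => hT.subset_Iio _ _ h) wellFounded_lt⟩
  let rank (δ : P) (a : A) : Ordinal.{v} := IsWellFounded.rank (fun β δ => β ∈ T δ a) δ
  have hrank : ∀ δ a, rank δ a < (Order.succ (k a)).ord := fun δ a =>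
    rank_lt_ord_succ (hk₀ a) (fun β δ => β ∈ T δ a) (fun δ => hT.mk_le δ a) δ
  have hord : ∀ a, (Order.succ (k a)).ord < κ.ord := fun a =>
    ord_lt_ord.2 (hκ.succ_lt (hkκ a))
  let f (δ : P) (a : A) : κ.ord.ToType :=
    Ordinal.ToType.mk ⟨rank δ a, (hrank δ a).trans (hord a)⟩
  have hf : ∀ β δ a, β ∈ T δ a → f β a < f δ a := fun β δ a h =>
    Ordinal.ToType.mk.lt_iff_lt.2 (IsWellFounded.rank_lt_of_rel (r := fun β δ => β ∈ T δ a) h)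
  refine ⟨f, ⟨fun β γ h => ?_, fun δ h => ?_⟩, fun a => Ordinal.ToType.mk ⟨_, hord a⟩,
    fun γ a => (Ordinal.ToType.mk.lt_iff_lt.2 (hrank γ a)).le⟩
  · obtain ⟨a, ha⟩ := hT.exists_mem β γ h
    exact (eventually_ge_atTop a).mono fun b hb => hf _ _ _ (hT.monotone γ hb ha)
  · obtain ⟨E, hE, a, ha⟩ := hT.exists_isClub δ h
    exact ⟨E, hE, (eventually_ge_atTop a).mono fun b hb β hβ =>
      hf _ _ _ (hT.monotone δ hb (ha hβ))⟩

end Filtration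

/-! ### Decomposability below a singular cardinal -/

section Singular

variable {S : Type u} {U : Ultrafilter S} {κ : Cardinal.{v}}

theorem isRegularCardinalOrder_ord_toType {θ : Cardinal.{v}} (hθ : θ.IsRegular) :
    IsRegularCardinalOrder θ.ord.ToType :=
  ⟨by rw [Ordinal.type_toType, cof_ord_toType hθ]⟩

theorem aleph0_lt_of_isSingular (hκ : κ.IsSingular) : ℵ₀ < κ :=
  hκ.aleph0_le.lt_of_ne fun h => not_isSingular_aleph0 (h ▸ hκ)

theorem decomposable_of_isSingular (hκ : κ.IsSingular) (hU : Decomposable U (Order.succ κ))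
    {C : Set κ.ord.ToType} (hC : IsCofinal C) (hCκ : #C < κ) {i : S → C}
    (hi : Tendsto i U atTop) {μ : Cardinal.{v}} (hμ : μ.IsRegular) (hCμ : #C < μ) (hμκ : μ < κ)
    (hμU : ¬ Decomposable U μ) : Decomposable U κ := by
  have hreg := isRegular_succ hκ.aleph0_le
  have := isRegularCardinalOrder_ord_toType hreg
  have := Cardinal.noMaxOrder hreg.aleph0_le
  have : Nonempty C := have ⟨s⟩ := U.neBot.nonempty; ⟨i s⟩
  obtain ⟨r, hr⟩ := (decomposable_iff_exists_tendsto hreg).1 hU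
  obtain ⟨k, hk₀, hkκ, T, hT⟩ := exists_isClubFiltration (P := (Order.succ κ).ord.ToType)
    (aleph0_lt_of_isSingular hκ) hC fun δ => Order.lt_succ_iff.1 (mk_Iio_ord_toType_lt δ)
  obtain ⟨f, H, g₀, hg₀⟩ := hT.exists_isClubIncreasing hκ.isSuccLimit hk₀ hkκ
  exact decomposable_of_isClubIncreasing (aleph0_lt_of_isSingular hκ) hκ.isSuccLimit
    ((Order.lt_succ κ).trans_eq (cof_ord_toType hreg).symm) hCκ H hg₀ hi hr hμ hCμ hμκ hμU

variable {A : Type v} [LinearOrder A] [Nonempty A] {k : A → Cardinal.{v}} {θ : Cardinal.{v}}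
  {T : θ.ord.ToType → A → Set θ.ord.ToType} {r : S → θ.ord.ToType}

theorem IsClubFiltration.exists_eventually_mem (hT : IsClubFiltration κ k T) (hθ : ℵ₀ ≤ θ)
    (hr : Tendsto r U atTop) (hU : ∀ i : S → A, ¬ Tendsto i U atTop) (β : θ.ord.ToType) :
    ∃ a, ∀ᶠ s in U, β ∈ T (r s) a := by
  let F (s : S) : A := Classical.epsilon fun a => β ∈ T (r s) a
  obtain ⟨a, ha⟩ : ∃ a, ¬ ∀ᶠ s in U, a ≤ F s := by simpa [tendsto_atTop] using hU F
  refine ⟨a, ?_⟩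
  have := nonempty_ord_toType hθ
  have := Cardinal.noMaxOrder hθ
  filter_upwards [Ultrafilter.eventually_not.2 ha, hr.eventually_gt_atTop β] with s hs hβ
  exact hT.monotone _ (not_le.1 hs).le (Classical.epsilon_spec (hT.exists_mem β _ hβ))

-- Kunen–Prikry: a single level `a` catches `θ` many indices almost everywhere, while `T (r s) a`,
-- having at most `k a < μ` elements, is bounded in any `μ` of them.
theorem IsClubFiltration.exists_forall_decomposable (hT : IsClubFiltration κ k T)
    (hθ : θ.IsRegular) (hA : #A < θ) (hr : Tendsto r U atTop)
    (hU : ∀ i : S → A, ¬ Tendsto i U atTop) :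
    ∃ a, ∀ μ : Cardinal.{v}, μ.IsRegular → k a < μ → μ ≤ θ → Decomposable U μ := by
  choose h hh using fun β => hT.exists_eventually_mem hθ.aleph0_le hr hU β
  obtain ⟨a, e, he, hea⟩ := exists_strictMono_forall_eq hθ hA h
  refine ⟨a, fun μ hμ hkμ hμθ => (decomposable_iff_exists_tendsto hμ).2 ?_⟩
  obtain ⟨e', he', -⟩ := exists_strictMono_of_le_mk (P := θ.ord.ToType) (C := Set.univ) (c := μ)
    (by simpa using hμθ)
  have hbdd : ∀ s, ∃ b, ∀ ξ ∈ (e ∘ e') ⁻¹' T (r s) a, ξ < b := fun s =>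
    exists_forall_lt_of_mk_lt_cof <| by
      rw [cof_ord_toType hμ]
      exact ((mk_preimage_of_injective _ _ (he.comp he').injective).trans
        (hT.mk_le _ _)).trans_lt hkμ
  choose x hx using hbdd
  exact ⟨x, tendsto_atTop.2 fun ξ => (hh (e (e' ξ))).mono fun s hs => (hx s ξ (hea _ ▸ hs)).le⟩

theorem exists_forall_decomposable_of_forall_not_tendsto (hκ : κ.IsSingular)
    (hU : Decomposable U (Order.succ κ)) {C : Set κ.ord.ToType} (hC : IsCofinal C) (hCκ : #C < κ)
    (hi : ∀ i : S → C, ¬ Tendsto i U atTop) :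
    ∃ l < κ, ∀ μ : Cardinal.{v}, μ.IsRegular → l < μ → μ < κ → Decomposable U μ := by
  have hreg := isRegular_succ hκ.aleph0_le
  have := nonempty_ord_toType hκ.aleph0_le
  have : Nonempty C := hC.nonempty.to_subtype
  obtain ⟨r, hr⟩ := (decomposable_iff_exists_tendsto hreg).1 hU
  obtain ⟨k, -, hkκ, T, hT⟩ := exists_isClubFiltration (P := (Order.succ κ).ord.ToType)
    (aleph0_lt_of_isSingular hκ) hC fun δ => Order.lt_succ_iff.1 (mk_Iio_ord_toType_lt δ)
  obtain ⟨a, ha⟩ := hT.exists_forall_decomposable hreg (hCκ.trans (Order.lt_succ κ)) hr hi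
  exact ⟨k a, hkκ a, fun μ hμ hkμ hμκ => ha μ hμ hkμ (hμκ.trans (Order.lt_succ κ)).le⟩

end Singular

/-- For singular `κ`: a `κ⁺`-decomposable but `κ`-indecomposable ultrafilter is
almost `<κ`-decomposable. -/
theorem stmt17 {S : Type u} (κ : Cardinal.{v}) (hκ : ℵ₀ ≤ κ)
    (hsing : κ.ord.cof < κ) (U : Ultrafilter S)
    (h1 : Decomposable U (Order.succ κ)) (h2 : ¬ Decomposable U κ) :
    ∃ l < κ, ∀ μ : Cardinal.{v}, μ.IsRegular → l < μ → μ < κ → Decomposable U μ := by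
  have hκs : κ.IsSingular := ⟨hκ, hsing.ne⟩
  obtain ⟨C, hC, hCcard⟩ := Order.exists_cof_eq κ.ord.ToType
  have hCκ : #C < κ := by rwa [hCcard, Ordinal.cof_toType]
  by_cases hi : ∃ i : S → C, Tendsto i U atTop
  · obtain ⟨i, hi⟩ := hi
    refine ⟨#C, hCκ, fun μ hμ hCμ hμκ => ?_⟩
    by_contra hμU
    exact h2 (decomposable_of_isSingular hκs h1 hC hCκ hi hμ hCμ hμκ hμU)
  · exact exists_forall_decomposable_of_forall_not_tendsto hκs h1 hC hCκ (not_exists.1 hi)
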